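/- Let n ≥ 5 be an integer. Then the Smith group of the subset intersection matrix A_{n,2,3,1} satisfies S(A_{n,2,3,1}) ≅ ℤ^{C(n,3)−C(n,2)} ⊕ (ℤ/2ℤ)^{C(n,2)−2n+1} ⊕ (ℤ/2(n−6)ℤ)^{n−2} ⊕ T, where T = ℤ/(n−3)(n−6)ℤ ⊕ ℤ/6ℤ if 3 divides n, and T = ℤ/3(n−3)(n−6)ℤ ⊕ ℤ/2ℤ otherwise; here ℤ/0ℤ is understood to be ℤ. -/

import Mathlib

open scoped Classical

/-- The `k`-element subsets of `{1,…,n}`. -/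
def ksubsets (n k : ℕ) : Finset (Finset ℕ) :=
  (Finset.Icc 1 n).powerset.filter fun A => A.card = k

/-- The subset intersection matrix `A_{n,kr,kc,ℓ}`; `A_{n,2,3,1}` has rows indexed by
2-subsets, columns by 3-subsets, entry `1` exactly when they meet in one element. -/
noncomputable def interMat (n kr kc ℓ : ℕ) :
    Matrix ↥(ksubsets n kr) ↥(ksubsets n kc) ℤ :=
  Matrix.of fun A B => if ((A : Finset ℕ) ∩ (B : Finset ℕ)).card = ℓ then 1 else 0

/-- The Smith group of an integer matrix. -/
abbrev SmithGroup {ρ γ : Type*} (M : Matrix ρ γ ℤ) : Type _ :=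
  (γ → ℤ) ⧸ Submodule.span ℤ (Set.range fun r : ρ => M r)

/-!
Write `V_S` for the indicator of the triples containing `S`. The row of `A_{n,2,3,1}` indexed by
`{i, j}` is `M_{ij} = V_i + V_j - 2 V_{ij}`. The lattice spanned by the `V_S` with `|S| ≤ 2` is a
direct summand of `ℤ^{C(n,3)}`, complemented by the unit vectors of the triples `a < b < c` with
`2 ≤ a`, `4 ≤ b`, `6 ≤ c`. It has a basis consisting of `V_∅`, `V_2`, the `M_{2j}` and
`W_j = V_{2j} - V_2` for `3 ≤ j`, and
`P_{ij} = V_{ij} - V_{2i} - V_{2j} + V_2` for `3 ≤ i < j` with `{i, j} ≠ {3, 4}`.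

In this basis the row lattice is generated by the `2 P_{ij}`, the `2 (n - 6) W_j`, the `M_{2j}`, the
star sum `∑_j M_{2j} = (n - 6) V_2 + 3 V_∅` and the total sum `∑ M_{ij} = 3 (n - 3) V_∅`. All but
the star sum are multiples of basis vectors; the last two form a `2 × 2` block whose Smith form
depends on whether `3` divides `n`.
-/

section SmithGroup

open Matrix Submodule

variable {ρ γ σ ι κ : Type*}

theorem nonempty_smithGroup_equiv_of_span_eq [Fintype ι] [Fintype γ] {M : Matrix ρ γ ℤ}
    {N : Matrix σ ι ℤ} (v : ι → γ → ℤ) (hv : span ℤ (Set.range v) = ⊤)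
    (hcard : Fintype.card ι = Fintype.card γ)
    (h : span ℤ (Set.range fun r => M r) = span ℤ (Set.range fun s => ∑ i, N s i • v i)) :
    Nonempty (SmithGroup M ≃+ SmithGroup N) := by
  let b : Module.Basis ι ℤ (γ → ℤ) := basisOfTopLeSpanOfCardEqFinrank v hv.ge (by simpa using hcard)
  have hb : ⇑b = v := coe_basisOfTopLeSpanOfCardEqFinrank ..
  refine ⟨(Quotient.equiv _ _ b.equivFun ?_).toAddEquiv⟩
  rw [h, map_span, ← Set.range_comp, ← hb]
  congr! 2
  funext s
  simp only [Function.comp_apply, LinearEquiv.coe_coe, ← b.equivFun_symm_apply,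
    LinearEquiv.apply_symm_apply]

theorem nonempty_smithGroup_equiv_mul_mul [Fintype ρ] [DecidableEq ρ] [Fintype γ] [DecidableEq γ]
    (M : Matrix ρ γ ℤ) {P : Matrix ρ ρ ℤ} {Q : Matrix γ γ ℤ} (hP : IsUnit P) (hQ : IsUnit Q) :
    Nonempty (SmithGroup M ≃+ SmithGroup (P * M * Q)) := by
  let e : (γ → ℤ) ≃ₗ[ℤ] (γ → ℤ) := LinearEquiv.ofBijective Q.vecMulLinear
    ⟨vecMul_injective_of_isUnit hQ, vecMul_surjective_iff_isUnit.2 hQ⟩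
  refine ⟨(Quotient.equiv _ _ e ?_).toAddEquiv⟩
  calc (span ℤ (Set.range M.row)).map Q.vecMulLinear
      = (LinearMap.range (M.vecMulLinear ∘ₗ P.vecMulLinear)).map Q.vecMulLinear := by
        rw [LinearMap.range_comp_of_range_eq_top _
          (LinearMap.range_eq_top.2 (vecMul_surjective_iff_isUnit.2 hP)), range_vecMulLinear]
    _ = LinearMap.range (P * M * Q).vecMulLinear := by
        rw [← LinearMap.range_comp]
        congr 1
        refine LinearMap.ext fun x => ?_
        simp only [LinearMap.comp_apply, vecMulLinear_apply, vecMul_vecMul, Matrix.mul_assoc]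
    _ = span ℤ (Set.range (P * M * Q).row) := range_vecMulLinear _

theorem nonempty_smithGroup_fromBlocks_equiv (A : Matrix ρ γ ℤ) (B : Matrix σ κ ℤ) :
    Nonempty (SmithGroup (fromBlocks A 0 0 B) ≃+ SmithGroup A × SmithGroup B) := by
  let e : (γ ⊕ κ → ℤ) ≃ₗ[ℤ] (γ → ℤ) × (κ → ℤ) := LinearEquiv.sumArrowLequivProdArrow γ κ ℤ ℤ
  let spanA := span ℤ (Set.range fun r => A r)
  let spanB := span ℤ (Set.range fun s => B s)
  let f : (γ ⊕ κ → ℤ) →ₗ[ℤ] SmithGroup A × SmithGroup B :=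
    spanA.mkQ.prodMap spanB.mkQ ∘ₗ e.toLinearMap
  have hf : Function.Surjective f :=
    ((mkQ_surjective _).prodMap (mkQ_surjective _)).comp e.surjective
  have hker : span ℤ (Set.range fun r => fromBlocks A 0 0 B r) = LinearMap.ker f := by
    have hmap : (span ℤ (Set.range fun r => fromBlocks A 0 0 B r)).map e.toLinearMap
        = spanA.prod spanB := by
      rw [map_span, ← LinearMap.span_inl_union_inr, ← Set.range_comp, ← Set.range_comp,
        ← Set.range_comp, ← Set.Sum.elim_range]
      congr 2
      funext r
      rcases r with r | r <;> rfl
    rw [LinearMap.ker_comp, LinearMap.ker_prodMap, ker_mkQ, ker_mkQ, ← hmap,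
      comap_map_eq_of_injective e.injective]
  exact ⟨((quotEquivOfEq _ _ hker).trans (f.quotKerEquivOfSurjective hf)).toAddEquiv⟩

theorem nonempty_smithGroup_diagonal_equiv [Finite ι] [DecidableEq ι] (d : ι → ℤ) :
    Nonempty (SmithGroup (diagonal d) ≃+ ∀ i, ZMod (d i).natAbs) := by
  cases nonempty_fintype ι
  have hspan : span ℤ (Set.range fun i => diagonal d i)
      = pi Set.univ fun i => Ideal.span {d i} := by
    refine le_antisymm (span_le.2 ?_) fun x hx => ?_
    · rintro _ ⟨i, rfl⟩ j -
      rcases eq_or_ne i j with rfl | hij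
      · simp
      · simp [diagonal_apply_ne _ hij]
    · choose c hc using fun i => Ideal.mem_span_singleton'.1 (hx i (Set.mem_univ i))
      have hx_eq : x = ∑ i, c i • diagonal d i := by
        funext j
        simp [diagonal_apply, hc]
      rw [hx_eq]
      exact sum_mem fun i _ => smul_mem _ _ (subset_span ⟨i, rfl⟩)
  exact ⟨((quotEquivOfEq _ _ hspan).trans (quotientPi _)).toAddEquiv.trans
    (AddEquiv.piCongrRight fun i => (Int.quotientSpanEquivZMod (d i)).toAddEquiv)⟩

theorem nonempty_smithGroup_fromBlocks_diagonal_const_equiv [Fintype ι] [DecidableEq ι] (m : ℤ)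
    {r : ℕ} (hr : Fintype.card ι = r) (N : Matrix σ κ ℤ) :
    Nonempty (SmithGroup (fromBlocks (diagonal fun _ : ι => m) 0 0 N) ≃+
      (Fin r → ZMod m.natAbs) × SmithGroup N) := by
  obtain ⟨eBlocks⟩ := nonempty_smithGroup_fromBlocks_equiv (diagonal fun _ : ι => m) N
  obtain ⟨eDiag⟩ := nonempty_smithGroup_diagonal_equiv fun _ : ι => m
  let reindex : (ι → ZMod m.natAbs) ≃+ (Fin r → ZMod m.natAbs) :=
    AddEquiv.arrowCongr (Fintype.equivFinOfCardEq hr) (AddEquiv.refl _)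
  exact ⟨eBlocks.trans ((eDiag.trans reindex).prodCongr (AddEquiv.refl _))⟩

theorem nonempty_smithGroup_triangular_equiv_of_dvd (a b c : ℤ) :
    Nonempty (SmithGroup !![c * a, c; 0, c * b] ≃+ ZMod c.natAbs × ZMod (c * a * b).natAbs) := by
  obtain ⟨e⟩ := nonempty_smithGroup_equiv_mul_mul !![c * a, c; 0, c * b]
    (P := !![1, 0; b, -1]) (Q := !![0, 1; 1, -a])
    ((isUnit_iff_isUnit_det _).2 (by simp [det_fin_two]))
    ((isUnit_iff_isUnit_det _).2 (by simp [det_fin_two]))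
  have hdiag : !![1, 0; b, -1] * !![c * a, c; 0, c * b] * !![0, 1; 1, -a]
      = diagonal ![c, c * a * b] := by
    ext i j
    fin_cases i <;> fin_cases j <;> simp <;> ring
  rw [hdiag] at e
  obtain ⟨eDiag⟩ := nonempty_smithGroup_diagonal_equiv ![c, c * a * b]
  exact ⟨(e.trans eDiag).trans (RingEquiv.piFinTwo _).toAddEquiv⟩

theorem nonempty_smithGroup_triangular_equiv_of_isCoprime {a c : ℤ} (h : IsCoprime a c) (d : ℤ) :
    Nonempty (SmithGroup !![a, c; 0, d] ≃+ ZMod (a * d).natAbs) := by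
  obtain ⟨s, t, hst⟩ := h
  obtain ⟨e⟩ := nonempty_smithGroup_equiv_mul_mul !![a, c; 0, d]
    (P := !![1, 0; -(d * t), 1]) (Q := !![s, -c; t, a])
    ((isUnit_iff_isUnit_det _).2 (by simp [det_fin_two]))
    ((isUnit_iff_isUnit_det _).2 (by simp [det_fin_two, mul_comm c, hst]))
  have hdiag : !![1, 0; -(d * t), 1] * !![a, c; 0, d] * !![s, -c; t, a] = diagonal ![1, a * d] := by
    ext i j
    fin_cases i <;> fin_cases j <;> simp <;> grind
  rw [hdiag] at e
  obtain ⟨eDiag⟩ := nonempty_smithGroup_diagonal_equiv ![1, a * d]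
  have : Unique (ZMod (![1, a * d] 0).natAbs) := inferInstanceAs (Unique (ZMod 1))
  exact ⟨((e.trans eDiag).trans (RingEquiv.piFinTwo _).toAddEquiv).trans AddEquiv.uniqueProd⟩

end SmithGroup

section Pairs

variable {ι G : Type*} [AddCommGroup G]

theorem mem_of_sum_mem_of_forall_ne {H : Submodule ℤ G} {s : Finset ι} {f : ι → G} {a : ι}
    (hsum : ∑ i ∈ s, f i ∈ H) (ha : a ∈ s) (hne : ∀ i ∈ s, i ≠ a → f i ∈ H) : f a ∈ H := by
  classical
  rw [← Finset.add_sum_erase s f ha] at hsum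
  exact (H.add_mem_iff_left (sum_mem fun i hi =>
    hne i (Finset.mem_of_mem_erase hi) (Finset.ne_of_mem_erase hi))).1 hsum

theorem powersetCard_two_insert [DecidableEq ι] {a : ι} {s : Finset ι} (ha : a ∉ s) :
    (insert a s).powersetCard 2 = s.powersetCard 2 ∪ s.image fun j => {a, j} := by
  rw [Finset.powersetCard_succ_insert ha, Finset.powersetCard_one, Finset.map_eq_image,
    Finset.image_image]
  rfl

theorem forall_mem_powersetCard_two_insert [DecidableEq ι] {a : ι} {s : Finset ι} (ha : a ∉ s)
    {p : Finset ι → Prop} : (∀ e ∈ (insert a s).powersetCard 2, p e) ↔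
      (∀ j ∈ s, p {a, j}) ∧ ∀ e ∈ s.powersetCard 2, p e := by
  simp only [powersetCard_two_insert ha, Finset.forall_mem_union, Finset.forall_mem_image, and_comm]

theorem sum_powersetCard_two_insert [DecidableEq ι] {a : ι} {s : Finset ι} (ha : a ∉ s)
    (f : Finset ι → G) :
    ∑ e ∈ (insert a s).powersetCard 2, f e =
      ∑ j ∈ s, f {a, j} + ∑ e ∈ s.powersetCard 2, f e := by
  have hdisj : Disjoint (s.powersetCard 2) (s.image fun j => {a, j}) := by
    rw [Finset.disjoint_left]
    rintro _ he hea
    obtain ⟨j, -, rfl⟩ := Finset.mem_image.1 hea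
    exact ha ((Finset.mem_powersetCard.1 he).1 (Finset.mem_insert_self a _))
  have hinj : Set.InjOn (fun j => ({a, j} : Finset ι)) s := fun i hi j _ hij => by
    have hi_mem : i ∈ ({a, j} : Finset ι) := Finset.ext_iff.1 hij i |>.1 (by simp)
    grind
  rw [powersetCard_two_insert ha, Finset.sum_union hdisj, Finset.sum_image hinj, add_comm]

theorem sum_powersetCard_two_sum (s : Finset ι) (g : ι → G) :
    ∑ e ∈ s.powersetCard 2, ∑ i ∈ e, g i = ((s.card : ℤ) - 1) • ∑ i ∈ s, g i := by
  classical
  induction s using Finset.induction_on with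
  | empty => rw [Finset.powersetCard_eq_empty.2 (by simp)]; simp
  | insert a s ha ih =>
    have hpair : ∀ j ∈ s, ∑ i ∈ {a, j}, g i = g a + g j := fun j hj =>
      Finset.sum_pair (ne_of_mem_of_not_mem hj ha).symm
    rw [sum_powersetCard_two_insert ha, ih, Finset.sum_congr rfl hpair, Finset.sum_add_distrib,
      Finset.sum_const, Finset.sum_insert ha, Finset.card_insert_of_notMem ha]
    push_cast
    module

theorem forall_mem_of_sum_mem_of_star_sum_mem [DecidableEq ι] {H : Submodule ℤ G}
    {s : Finset ι} {a : ι} {x : Finset ι → G} (f : Finset ι) (ha : a ∉ s)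
    (hsum : ∑ e ∈ (insert a s).powersetCard 2, x e ∈ H)
    (hstar : ∀ i ∈ insert a s, ∑ j ∈ (insert a s).erase i, x {i, j} ∈ H)
    (hx : ∀ e ∈ s.powersetCard 2, e ≠ f → x e ∈ H) :
    ∀ e ∈ (insert a s).powersetCard 2, x e ∈ H := by
  have hs : ∀ e ∈ s.powersetCard 2, x e ∈ H := by
    have hstar_a := hstar a (Finset.mem_insert_self a s)
    rw [Finset.erase_insert ha] at hstar_a
    rw [sum_powersetCard_two_insert ha, H.add_mem_iff_right hstar_a] at hsum
    intro e he
    rcases eq_or_ne e f with rfl | hef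
    · exact mem_of_sum_mem_of_forall_ne hsum he hx
    · exact hx e he hef
  refine (forall_mem_powersetCard_two_insert ha).2 ⟨fun j hj => ?_, hs⟩
  have hja : a ∈ (insert a s).erase j := by grind
  rw [Finset.pair_comm]
  refine mem_of_sum_mem_of_forall_ne (f := fun i => x {j, i})
    (hstar j (Finset.mem_insert_of_mem hj)) hja
    fun i hi hia => hs _ (Finset.mem_powersetCard.2 ⟨?_, Finset.card_pair ?_⟩) <;> grind

end Pairs

section Rows

open Finset

theorem mem_ksubsets {n k : ℕ} {A : Finset ℕ} : A ∈ ksubsets n k ↔ A ⊆ Icc 1 n ∧ #A = k := by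
  rw [ksubsets, mem_filter, mem_powerset]

theorem ksubsets_eq_powersetCard (n k : ℕ) : ksubsets n k = (Icc 1 n).powersetCard k :=
  ext fun _ => by rw [mem_ksubsets, mem_powersetCard]

/-- The row `S` of the inclusion matrix of sets versus `k`-subsets of `{1,…,n}`. -/
def inclRow (n k : ℕ) (S : Finset ℕ) : ↥(ksubsets n k) → ℤ :=
  fun B => if S ⊆ B then 1 else 0

/-- The row `e` of the matrix recording which `k`-subsets of `{1,…,n}` meet `e` in one element. -/
def meetRow (n k : ℕ) (e : Finset ℕ) : ↥(ksubsets n k) → ℤ :=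
  fun B => if #(e ∩ B) = 1 then 1 else 0

/-- The sum of the rows `meetRow n k e` over all pairs `e` containing `i`. -/
def starRow (n k i : ℕ) : ↥(ksubsets n k) → ℤ :=
  ∑ j ∈ (Icc 1 n).erase i, meetRow n k {i, j}

/-- Minus the indicator of the `k`-subsets that contain `z` but not `j`. -/
def edgeRow (n k z j : ℕ) : ↥(ksubsets n k) → ℤ :=
  inclRow n k {z, j} - inclRow n k {z}

/-- For a pair `e`, the indicator of the `k`-subsets that either miss `z` and contain `e`, or
contain `z` and miss `e`. -/
def triangleRow (n k z : ℕ) (e : Finset ℕ) : ↥(ksubsets n k) → ℤ :=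
  inclRow n k e - ∑ i ∈ e, inclRow n k {z, i} + inclRow n k {z}

variable (n k : ℕ)

theorem sum_inclRow_insert (S : Finset ℕ) :
    ∑ j ∈ Icc 1 n \ S, inclRow n k (insert j S) = ((k : ℤ) - #S) • inclRow n k S := by
  funext B
  obtain ⟨hB, hBcard⟩ := mem_ksubsets.1 B.2
  by_cases hS : S ⊆ B
  · have hcount : (Icc 1 n \ S) ∩ (B : Finset ℕ) = (B : Finset ℕ) \ S := by grind
    have hcard : (#((B : Finset ℕ) \ S) : ℤ) = k - #S := by rw [cast_card_sdiff hS, hBcard]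
    simp [inclRow, insert_subset_iff, hS, hcount, hcard]
  · simp [inclRow, insert_subset_iff, hS]

theorem sum_inclRow_singleton : ∑ i ∈ Icc 1 n, inclRow n k {i} = (k : ℤ) • inclRow n k ∅ := by
  simpa using sum_inclRow_insert n k ∅

theorem sum_inclRow_pair (i : ℕ) :
    ∑ j ∈ (Icc 1 n).erase i, inclRow n k {i, j} = ((k : ℤ) - 1) • inclRow n k {i} := by
  simpa [pair_comm, sdiff_singleton_eq_erase] using sum_inclRow_insert n k {i}

theorem sum_powersetCard_inclRow (t : ℕ) :
    ∑ e ∈ (Icc 1 n).powersetCard t, inclRow n k e = (k.choose t : ℤ) • inclRow n k ∅ := by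
  funext B
  obtain ⟨hB, hBcard⟩ := mem_ksubsets.1 B.2
  have hfilter : {e ∈ (Icc 1 n).powersetCard t | e ⊆ (B : Finset ℕ)} =
      (B : Finset ℕ).powersetCard t := by
    grind
  simp [inclRow, hfilter, hBcard]

variable {n k}

theorem meetRow_eq {e : Finset ℕ} (he : #e = 2) :
    meetRow n k e = ∑ i ∈ e, inclRow n k {i} - (2 : ℤ) • inclRow n k e := by
  obtain ⟨i, j, hij, rfl⟩ := card_eq_two.1 he
  funext B
  by_cases hi : i ∈ (B : Finset ℕ) <;> by_cases hj : j ∈ (B : Finset ℕ) <;>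
    simp [meetRow, inclRow, sum_pair hij, insert_subset_iff, insert_inter_of_mem,
      insert_inter_of_notMem, singleton_inter_of_mem, singleton_inter_of_notMem, hi, hj, hij]

theorem meetRow_pair {i j : ℕ} (hij : i ≠ j) : meetRow n k {i, j} =
    inclRow n k {i} + inclRow n k {j} - (2 : ℤ) • inclRow n k {i, j} := by
  rw [meetRow_eq (card_pair hij), sum_pair hij]

theorem starRow_eq {i : ℕ} (hi : i ∈ Icc 1 n) :
    starRow n k i = ((n : ℤ) - 2 * k) • inclRow n k {i} + (k : ℤ) • inclRow n k ∅ := by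
  have hpair : ∀ j ∈ (Icc 1 n).erase i, meetRow n k {i, j} =
      inclRow n k {i} + inclRow n k {j} - (2 : ℤ) • inclRow n k {i, j} :=
    fun j hj => meetRow_pair (ne_of_mem_erase hj).symm
  have hsum : ∑ j ∈ (Icc 1 n).erase i, inclRow n k {j} =
      (k : ℤ) • inclRow n k ∅ - inclRow n k {i} := by
    rw [← sum_inclRow_singleton, ← add_sum_erase _ _ hi, add_sub_cancel_left]
  have hcard : (#((Icc 1 n).erase i) : ℤ) = n - 1 := by
    rw [cast_card_erase_of_mem hi, Nat.card_Icc, Nat.add_sub_cancel]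
  rw [starRow, sum_congr rfl hpair, sum_sub_distrib, sum_add_distrib, sum_const, hsum,
    ← smul_sum, sum_inclRow_pair, ← natCast_zsmul, hcard]
  module

variable (n k) in
theorem sum_starRow :
    ∑ i ∈ Icc 1 n, starRow n k i = (2 * (k * (n - k)) : ℤ) • inclRow n k ∅ := by
  rw [sum_congr rfl fun i hi => starRow_eq hi, sum_add_distrib, ← smul_sum, sum_inclRow_singleton,
    sum_const, Nat.card_Icc, Nat.add_sub_cancel, ← natCast_zsmul]
  module

variable (n k) in
theorem sum_meetRow :
    ∑ e ∈ (Icc 1 n).powersetCard 2, meetRow n k e = (k * (n - k) : ℤ) • inclRow n k ∅ := by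
  have hchoose : (k.choose 2 : ℤ) * 2 = k * (k - 1) := by
    rcases k with _ | k
    · simp
    · have h := Nat.add_one_mul_choose_eq k 1
      rw [Nat.choose_one_right] at h
      push_cast
      rw [add_sub_cancel_right]
      exact_mod_cast h.symm
  rw [sum_congr rfl fun e he => meetRow_eq (mem_powersetCard.1 he).2, sum_sub_distrib,
    sum_powersetCard_two_sum, ← smul_sum, sum_powersetCard_inclRow, sum_inclRow_singleton,
    Nat.card_Icc, Nat.add_sub_cancel, smul_smul, smul_smul, ← sub_smul, mul_comm 2, hchoose]
  congr 1
  ring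

theorem smul_edgeRow {z j : ℕ} (hz : z ∈ Icc 1 n) (hj : j ∈ Icc 1 n) (hzj : z ≠ j) :
    (2 * (n - 2 * k) : ℤ) • edgeRow n k z j =
      starRow n k j - starRow n k z - ((n : ℤ) - 2 * k) • meetRow n k {z, j} := by
  rw [edgeRow, starRow_eq hz, starRow_eq hj, meetRow_pair hzj]
  module

theorem two_smul_triangleRow {z : ℕ} {e : Finset ℕ} (he : #e = 2) (hz : z ∉ e) :
    (2 : ℤ) • triangleRow n k z e = ∑ i ∈ e, meetRow n k {z, i} - meetRow n k e := by
  rw [sum_congr rfl fun i hi => meetRow_pair (ne_of_mem_of_not_mem hi hz).symm, meetRow_eq he,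
    triangleRow, sum_sub_distrib, sum_add_distrib, sum_const, he, ← smul_sum]
  module

end Rows

section Closure

open Finset

variable {n k : ℕ} {H : Submodule ℤ (↥(ksubsets n k) → ℤ)} {f : Finset ℕ}

theorem inclRow_singleton_mem (hJ : inclRow n k ∅ ∈ H) (hV : inclRow n k {2} ∈ H)
    (hM : ∀ j ∈ Icc 3 n, meetRow n k {2, j} ∈ H) (hU : ∀ j ∈ Icc 3 n, inclRow n k {2, j} ∈ H)
    {i : ℕ} (hi : i ∈ Icc 1 n) : inclRow n k {i} ∈ H := by
  have hne : ∀ j ∈ Icc 1 n, j ≠ 1 → inclRow n k {j} ∈ H := by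
    intro j hj hj1
    rcases eq_or_ne 2 j with rfl | hj2
    · exact hV
    · have hj3 : j ∈ Icc 3 n := by grind
      have hrow : inclRow n k {j} =
          meetRow n k {2, j} - inclRow n k {2} + (2 : ℤ) • inclRow n k {2, j} := by
        rw [meetRow_pair hj2]
        abel
      rw [hrow]
      exact add_mem (sub_mem (hM j hj3) hV) (H.smul_mem 2 (hU j hj3))
  rcases eq_or_ne i 1 with rfl | hi1
  · refine mem_of_sum_mem_of_forall_ne (f := fun i => inclRow n k {i}) ?_ hi hne
    rw [sum_inclRow_singleton]
    exact H.smul_mem _ hJ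
  · exact hne i hi hi1

theorem inclRow_mem_of_mem_powersetCard_two (hn : 2 ≤ n) (hJ : inclRow n k ∅ ∈ H)
    (hV : ∀ i ∈ Icc 1 n, inclRow n k {i} ∈ H) (hU : ∀ j ∈ Icc 3 n, inclRow n k {2, j} ∈ H)
    (hP : ∀ e ∈ (Icc 3 n).powersetCard 2, e ≠ f → triangleRow n k 2 e ∈ H) :
    ∀ e ∈ (Icc 1 n).powersetCard 2, inclRow n k e ∈ H := by
  have hIcc : insert 1 (Icc 2 n) = Icc 1 n := insert_Icc_add_one_left_eq_Icc (by lia)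
  have hbase : ∀ e ∈ (Icc 2 n).powersetCard 2, e ≠ f → inclRow n k e ∈ H := by
    rw [← insert_Icc_add_one_left_eq_Icc hn, forall_mem_powersetCard_two_insert (by simp)]
    refine ⟨fun j hj _ => hU j hj, fun e he hef => ?_⟩
    have hrow : inclRow n k e =
        triangleRow n k 2 e + ∑ i ∈ e, inclRow n k {2, i} - inclRow n k {2} := by
      rw [triangleRow]
      abel
    rw [hrow]
    exact sub_mem (add_mem (hP e he hef) (sum_mem fun i hi => hU i ((mem_powersetCard.1 he).1 hi)))
      (hV 2 (by grind))
  rw [← hIcc]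
  refine forall_mem_of_sum_mem_of_star_sum_mem f (by simp) ?_ (fun i hi => ?_) hbase <;> rw [hIcc]
  · rw [sum_powersetCard_inclRow]
    exact H.smul_mem _ hJ
  · rw [sum_inclRow_pair]
    exact H.smul_mem _ (hV i (hIcc ▸ hi))

theorem inclRow_mem_of_card_le_two (hn : 2 ≤ n) (hJ : inclRow n k ∅ ∈ H)
    (hV : inclRow n k {2} ∈ H) (hM : ∀ j ∈ Icc 3 n, meetRow n k {2, j} ∈ H)
    (hW : ∀ j ∈ Icc 3 n, edgeRow n k 2 j ∈ H)
    (hP : ∀ e ∈ (Icc 3 n).powersetCard 2, e ≠ f → triangleRow n k 2 e ∈ H)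
    {S : Finset ℕ} (hS : S ⊆ Icc 1 n) (hcard : #S ≤ 2) : inclRow n k S ∈ H := by
  have hU : ∀ j ∈ Icc 3 n, inclRow n k {2, j} ∈ H := fun j hj =>
    (H.sub_mem_iff_left hV).1 (hW j hj)
  have hV_all : ∀ i ∈ Icc 1 n, inclRow n k {i} ∈ H := fun i hi =>
    inclRow_singleton_mem hJ hV hM hU hi
  interval_cases hS_card : #S
  · rwa [card_eq_zero.1 hS_card]
  · obtain ⟨i, rfl⟩ := card_eq_one.1 hS_card
    exact hV_all i (singleton_subset_iff.1 hS)
  · exact inclRow_mem_of_mem_powersetCard_two hn hJ hV_all hU hP S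
      (mem_powersetCard.2 ⟨hS, hS_card⟩)

theorem starRow_mem (hE : starRow n k 2 ∈ H)
    (hJ : (k * (n - k) : ℤ) • inclRow n k ∅ ∈ H)
    (hM : ∀ j ∈ Icc 3 n, meetRow n k {2, j} ∈ H)
    (hW : ∀ j ∈ Icc 3 n, (2 * (n - 2 * k) : ℤ) • edgeRow n k 2 j ∈ H)
    {i : ℕ} (hi : i ∈ Icc 1 n) : starRow n k i ∈ H := by
  have hne : ∀ j ∈ Icc 1 n, j ≠ 1 → starRow n k j ∈ H := by
    intro j hj hj1
    rcases eq_or_ne 2 j with rfl | hj2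
    · exact hE
    · have hj3 : j ∈ Icc 3 n := by grind
      have hrow := hW j hj3
      rw [smul_edgeRow (by grind) hj hj2] at hrow
      exact (H.sub_mem_iff_left hE).1 ((H.sub_mem_iff_left (H.smul_mem _ (hM j hj3))).1 hrow)
  rcases eq_or_ne i 1 with rfl | hi1
  · refine mem_of_sum_mem_of_forall_ne ?_ hi hne
    rw [sum_starRow, mul_smul]
    exact H.smul_mem 2 hJ
  · exact hne i hi hi1

theorem meetRow_mem_of_mem_powersetCard_two (hn : 2 ≤ n) (hE : starRow n k 2 ∈ H)
    (hJ : (k * (n - k) : ℤ) • inclRow n k ∅ ∈ H)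
    (hM : ∀ j ∈ Icc 3 n, meetRow n k {2, j} ∈ H)
    (hW : ∀ j ∈ Icc 3 n, (2 * (n - 2 * k) : ℤ) • edgeRow n k 2 j ∈ H)
    (hP : ∀ e ∈ (Icc 3 n).powersetCard 2, e ≠ f → (2 : ℤ) • triangleRow n k 2 e ∈ H) :
    ∀ e ∈ (Icc 1 n).powersetCard 2, meetRow n k e ∈ H := by
  have hIcc : insert 1 (Icc 2 n) = Icc 1 n := insert_Icc_add_one_left_eq_Icc (by lia)
  have hbase : ∀ e ∈ (Icc 2 n).powersetCard 2, e ≠ f → meetRow n k e ∈ H := by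
    rw [← insert_Icc_add_one_left_eq_Icc hn, forall_mem_powersetCard_two_insert (by simp)]
    refine ⟨fun j hj _ => hM j hj, fun e he hef => ?_⟩
    obtain ⟨he_sub, he_card⟩ := mem_powersetCard.1 he
    have hrow := hP e he hef
    rw [two_smul_triangleRow he_card fun h2 => by grind] at hrow
    exact (H.sub_mem_iff_right (sum_mem fun i hi => hM i (he_sub hi))).1 hrow
  rw [← hIcc]
  refine forall_mem_of_sum_mem_of_star_sum_mem f (by simp) ?_ (fun i hi => ?_) hbase <;> rw [hIcc]
  · rwa [sum_meetRow]
  · exact starRow_mem hE hJ hM hW (hIcc ▸ hi)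

end Closure

section Elimination

open Finset

variable {n k t : ℕ} {H : Submodule ℤ (↥(ksubsets n k) → ℤ)}

theorem inclRow_coe (B : ↥(ksubsets n k)) : inclRow n k B = Pi.single B 1 := by
  funext C
  have hiff : (B : Finset ℕ) ⊆ C ↔ C = B :=
    ⟨fun h => Subtype.ext (eq_of_subset_of_card_le h
      ((mem_ksubsets.1 C.2).2.trans (mem_ksubsets.1 B.2).2.symm).le).symm, fun h => h ▸ Subset.rfl⟩
  simp only [inclRow, hiff, Pi.single_apply]

theorem sum_smul_inclRow (g : ↥(ksubsets n k) → ℤ) :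
    ∑ B : ↥(ksubsets n k), g B • inclRow n k B = g := by
  simp only [inclRow_coe, ← Pi.single_smul, smul_eq_mul, mul_one, univ_sum_single]

theorem indicator_subset_disjoint_mem (hH : ∀ S ⊆ Icc 1 n, #S ≤ t → inclRow n k S ∈ H)
    {S S' : Finset ℕ} (hS : S ⊆ Icc 1 n) (hS' : S' ⊆ Icc 1 n) (hcard : #S + #S' ≤ t) :
    (fun B : ↥(ksubsets n k) => if S ⊆ B ∧ Disjoint S' B then (1 : ℤ) else 0) ∈ H := by
  induction S' using Finset.induction_on generalizing S with
  | empty =>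
    simp only [disjoint_empty_left, and_true]
    exact hH S hS (by simpa using hcard)
  | insert a S' ha ih =>
    rw [card_insert_of_notMem ha] at hcard
    have hsplit :
        (fun B : ↥(ksubsets n k) => if S ⊆ B ∧ Disjoint (insert a S') B then (1 : ℤ) else 0) =
          (fun B : ↥(ksubsets n k) => if S ⊆ B ∧ Disjoint S' B then (1 : ℤ) else 0) -
          fun B : ↥(ksubsets n k) => if insert a S ⊆ B ∧ Disjoint S' B then (1 : ℤ) else 0 := by
      funext B
      by_cases haB : a ∈ (B : Finset ℕ) <;> simp [insert_subset_iff, haB]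
    rw [hsplit]
    exact sub_mem (ih hS (by grind) (by lia))
      (ih (by grind) (by grind) (by have := card_insert_le a S; lia))

theorem inclRow_mem_of_forall_ne (hH : ∀ S ⊆ Icc 1 n, #S ≤ t → inclRow n k S ∈ H)
    {T : Finset ℕ} (hT : T ∈ ksubsets n k) (S S' : Finset ℕ) (hS : S ⊆ T) (hS' : S' ⊆ Icc 1 n)
    (hST : Disjoint S' T) (hcard : #S + #S' ≤ t)
    (hne : ∀ B ∈ ksubsets n k, S ⊆ B → Disjoint S' B → B ≠ T → inclRow n k B ∈ H) :
    inclRow n k T ∈ H := by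
  have hind := indicator_subset_disjoint_mem hH (hS.trans (mem_ksubsets.1 hT).1) hS' hcard
  rw [← sum_smul_inclRow fun B : ↥(ksubsets n k) => if S ⊆ B ∧ Disjoint S' B then (1 : ℤ) else 0]
    at hind
  have hTmem := mem_of_sum_mem_of_forall_ne hind (mem_univ ⟨T, hT⟩) fun B _ hBT => by
    split_ifs with hB
    · exact H.smul_mem _ (hne B B.2 hB.1 hB.2 (Subtype.coe_ne_coe.2 hBT))
    · simp
  simpa [hS, hST] using hTmem

end Elimination

section Free

open Finset

/-- The triples `a < b < c` in `{1,…,n}` with `2 ≤ a`, `4 ≤ b` and `6 ≤ c`; under this ballot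
condition their unit vectors complement the lattice spanned by the `inclRow n 3 S` with `#S ≤ 2`.
The condition is encoded as `1 ∉ T`, `¬ {2, 3} ⊆ T` and `¬ T ⊆ {1,…,5}`. -/
def freeTriples (n : ℕ) : Finset (Finset ℕ) :=
  {T ∈ ksubsets n 3 | 1 ∉ T ∧ ¬ {2, 3} ⊆ T ∧ ¬ T ⊆ Icc 1 5}

/-- The pairs in `{3,…,n}` other than `{3, 4}`, which is dropped because the sum over the pairs
avoiding `1` makes one of them redundant. -/
def freePairs (n : ℕ) : Finset (Finset ℕ) :=
  ((Icc 3 n).powersetCard 2).erase {3, 4}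

variable {n : ℕ}

theorem mem_freeTriples_of_ne {T : Finset ℕ} (hT : T ∈ ksubsets n 3) (h1 : 1 ∉ T)
    (h23 : ¬ {2, 3} ⊆ T) (h245 : T ≠ {2, 4, 5}) (h345 : T ≠ {3, 4, 5}) : T ∈ freeTriples n := by
  refine mem_filter.2 ⟨hT, h1, h23, fun h5 => ?_⟩
  have hcard : 3 ≤ #T := (mem_ksubsets.1 hT).2.ge
  by_cases h2 : 2 ∈ T
  · exact h245 (eq_of_subset_of_card_le (by grind) hcard)
  · exact h345 (eq_of_subset_of_card_le (by grind) hcard)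

theorem freeTriples_eq_sdiff (n : ℕ) : freeTriples n = (Icc 2 n).powersetCard 3 \
    ((Icc 4 n).image (insert · {2, 3}) ∪ {{2, 4, 5}, {3, 4, 5}}) := by
  ext T
  rw [mem_sdiff, mem_powersetCard]
  refine ⟨fun h => ?_, fun ⟨⟨hT, hcard⟩, hne⟩ => ?_⟩
  · obtain ⟨hT, h1, h23, h5⟩ := mem_filter.1 h
    obtain ⟨hT, hcard⟩ := mem_ksubsets.1 hT
    refine ⟨⟨by grind, hcard⟩, fun hmem => ?_⟩
    rcases mem_union.1 hmem with himage | hpair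
    · obtain ⟨c, -, rfl⟩ := mem_image.1 himage
      exact h23 (subset_insert c {2, 3})
    · rcases mem_insert.1 hpair with rfl | hpair
      · exact h5 (by decide)
      · exact h5 (mem_singleton.1 hpair ▸ by decide)
  · refine mem_freeTriples_of_ne (mem_ksubsets.2 ⟨by grind, hcard⟩) (by grind) (fun h23 => hne ?_)
      (by grind) (by grind)
    obtain ⟨c, hc, rfl⟩ := exists_eq_insert_iff.2 ⟨h23, hcard.symm⟩
    exact mem_union_left _ (mem_image_of_mem _ (by grind))

theorem card_freeTriples (hn : 5 ≤ n) : #(freeTriples n) = n.choose 3 - n.choose 2 := by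
  have hinj : Set.InjOn (insert · ({2, 3} : Finset ℕ)) (Icc 4 n : Finset ℕ) :=
    (insert_inj_on {2, 3}).mono fun c hc => by grind
  have hdisj : Disjoint ((Icc 4 n).image (insert · ({2, 3} : Finset ℕ)))
      {{2, 4, 5}, {3, 4, 5}} := by
    rw [disjoint_left]
    intro T himage hpair
    obtain ⟨c, -, rfl⟩ := mem_image.1 himage
    have h2 : 2 ∈ insert c ({2, 3} : Finset ℕ) := by simp
    have h3 : 3 ∈ insert c ({2, 3} : Finset ℕ) := by simp
    grind
  have hsub : (Icc 4 n).image (insert · {2, 3}) ∪ {{2, 4, 5}, {3, 4, 5}} ⊆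
      (Icc 2 n).powersetCard 3 := by
    intro T hT
    rw [mem_powersetCard]
    grind
  have hpair : #({{2, 4, 5}, {3, 4, 5}} : Finset (Finset ℕ)) = 2 := rfl
  rw [freeTriples_eq_sdiff, card_sdiff_of_subset hsub, card_union_of_disjoint hdisj,
    card_image_of_injOn hinj, hpair, card_powersetCard, Nat.card_Icc, Nat.card_Icc]
  obtain ⟨m, rfl⟩ := Nat.exists_eq_add_of_le' hn
  have h3 := Nat.choose_succ_succ' (m + 4) 2
  have h2 := Nat.choose_succ_succ' (m + 4) 1
  rw [Nat.choose_one_right] at h2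
  have hcard3 : m + 5 + 1 - 2 = m + 4 := by lia
  rw [hcard3]
  lia

theorem card_freePairs (hn : 5 ≤ n) : #(freePairs n) = n.choose 2 - 2 * n + 2 := by
  have hmem : ({3, 4} : Finset ℕ) ∈ (Icc 3 n).powersetCard 2 := by
    rw [mem_powersetCard]
    exact ⟨by grind, rfl⟩
  rw [freePairs, card_erase_of_mem hmem, card_powersetCard, Nat.card_Icc]
  obtain ⟨m, rfl⟩ := Nat.exists_eq_add_of_le' hn
  have h5 := Nat.choose_succ_succ' (m + 4) 1
  have h4 := Nat.choose_succ_succ' (m + 3) 1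
  have h3 := Nat.choose_succ_succ' (m + 2) 1
  have h2 := Nat.choose_succ_succ' (m + 1) 1
  simp only [Nat.choose_one_right] at h2 h3 h4 h5
  have hcard : m + 5 + 1 - 3 = m + 3 := by lia
  rw [hcard]
  lia

variable {H : Submodule ℤ (↥(ksubsets n 3) → ℤ)}

theorem inclRow_mem_of_not_two_three_subset (hn : 5 ≤ n)
    (hH : ∀ S ⊆ Icc 1 n, #S ≤ 2 → inclRow n 3 S ∈ H)
    (hfree : ∀ T ∈ freeTriples n, inclRow n 3 T ∈ H) {T : Finset ℕ} (hT : T ∈ ksubsets n 3)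
    (h1 : 1 ∉ T) (h23 : ¬ {2, 3} ⊆ T) : inclRow n 3 T ∈ H := by
  by_cases h345 : T = {3, 4, 5}
  · subst h345
    exact inclRow_mem_of_forall_ne hH hT ∅ {1, 2} (by simp) (by grind) (by simp) (by simp)
      fun B hB _ hdisj hne =>
        hfree B (mem_freeTriples_of_ne hB (by grind) (by grind) (by grind) hne)
  by_cases h245 : T = {2, 4, 5}
  · subst h245
    exact inclRow_mem_of_forall_ne hH hT ∅ {1, 3} (by simp) (by grind) (by simp) (by simp)
      fun B hB _ hdisj hne =>
        hfree B (mem_freeTriples_of_ne hB (by grind) (by grind) hne (by grind))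
  exact hfree T (mem_freeTriples_of_ne hT h1 h23 h245 h345)

theorem inclRow_mem_of_two_three_subset (hn : 5 ≤ n)
    (hH : ∀ S ⊆ Icc 1 n, #S ≤ 2 → inclRow n 3 S ∈ H)
    (hfree : ∀ T ∈ freeTriples n, inclRow n 3 T ∈ H) {T : Finset ℕ} (hT : T ∈ ksubsets n 3)
    (h1 : 1 ∉ T) (h23 : {2, 3} ⊆ T) : inclRow n 3 T ∈ H := by
  have hinsert : ∀ B ∈ ksubsets n 3, {2, 3} ⊆ B → ∃ c ∉ ({2, 3} : Finset ℕ), insert c {2, 3} = B :=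
    fun B hB hB23 => exists_eq_insert_iff.2 ⟨hB23, (mem_ksubsets.1 hB).2.symm⟩
  have hlarge : ∀ c, 6 ≤ c → insert c {2, 3} ∈ ksubsets n 3 →
      inclRow n 3 (insert c {2, 3}) ∈ H := by
    intro c hc hmem
    refine inclRow_mem_of_forall_ne hH hmem {c} {1} (by simp) (by grind)
      (disjoint_singleton_left.2 (by grind)) (by simp) fun B hB hcB hdisj hne =>
        inclRow_mem_of_not_two_three_subset hn hH hfree hB (disjoint_singleton_left.1 hdisj)
          fun hB23 => hne ?_
    obtain ⟨d, -, rfl⟩ := hinsert B hB hB23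
    grind
  have hsmall : ∀ c ∈ ({4, 5} : Finset ℕ), insert c {2, 3} ∈ ksubsets n 3 →
      inclRow n 3 (insert c {2, 3}) ∈ H := by
    intro c hc hmem
    -- `9 - c` is the other element of `{4, 5}`.
    refine inclRow_mem_of_forall_ne hH hmem ∅ {1, 9 - c} (by simp) (by grind)
      (by rw [disjoint_left]; grind) (by grind) fun B hB _ hdisj hne => ?_
    by_cases hB23 : {2, 3} ⊆ B
    · obtain ⟨d, hd, rfl⟩ := hinsert B hB hB23
      have hd0 : d ∈ Icc 1 n := (mem_ksubsets.1 hB).1 (mem_insert_self d _)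
      exact hlarge d (by grind) hB
    · exact inclRow_mem_of_not_two_three_subset hn hH hfree hB (by grind) hB23
  obtain ⟨c, hc, rfl⟩ := hinsert T hT h23
  have hc0 : c ∈ Icc 1 n := (mem_ksubsets.1 hT).1 (mem_insert_self c _)
  rcases le_or_gt 6 c with hc6 | hc6
  · exact hlarge c hc6 hT
  · exact hsmall c (by grind) hT

theorem inclRow_mem_of_mem_ksubsets_three (hn : 5 ≤ n)
    (hH : ∀ S ⊆ Icc 1 n, #S ≤ 2 → inclRow n 3 S ∈ H)
    (hfree : ∀ T ∈ freeTriples n, inclRow n 3 T ∈ H) {T : Finset ℕ} (hT : T ∈ ksubsets n 3) :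
    inclRow n 3 T ∈ H := by
  have hno1 : ∀ B ∈ ksubsets n 3, 1 ∉ B → inclRow n 3 B ∈ H := by
    intro B hB h1
    by_cases h23 : {2, 3} ⊆ B
    · exact inclRow_mem_of_two_three_subset hn hH hfree hB h1 h23
    · exact inclRow_mem_of_not_two_three_subset hn hH hfree hB h1 h23
  by_cases h1 : 1 ∈ T
  · have hcard : #(T.erase 1) = 2 := by rw [card_erase_of_mem h1, (mem_ksubsets.1 hT).2]
    refine inclRow_mem_of_forall_ne hH hT (T.erase 1) ∅ (erase_subset 1 T) (by simp) (by simp)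
      (by simp [hcard]) fun B hB hTB _ hne => hno1 B hB fun hB1 => hne ?_
    exact (eq_of_subset_of_card_le (by grind)
      ((mem_ksubsets.1 hB).2.trans (mem_ksubsets.1 hT).2.symm).le).symm
  · exact hno1 T hT h1

end Free

section NormalForm

open Finset Matrix Submodule

/-- Index set of the basis of `ℤ^{C(n,3)}` adapted to the rows of `A_{n,2,3,1}`. -/
abbrev AdaptedIndex (n : ℕ) : Type :=
  ↥(freeTriples n) ⊕ ↥(freePairs n) ⊕ ↥(Icc 3 n) ⊕ ↥(Icc 3 n) ⊕ Fin 2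

/-- The basis of `ℤ^{C(n,3)}` adapted to the rows of `A_{n,2,3,1}`. -/
def adaptedFamily (n : ℕ) : AdaptedIndex n → ↥(ksubsets n 3) → ℤ :=
  Sum.elim (fun T => inclRow n 3 T) <| Sum.elim (fun e => triangleRow n 3 2 e) <|
    Sum.elim (fun j => edgeRow n 3 2 j) <| Sum.elim (fun j => meetRow n 3 {2, (j : ℕ)})
      ![inclRow n 3 {2}, inclRow n 3 ∅]

/-- Generators of the row lattice of `A_{n,2,3,1}`, all but `starRow n 3 2` multiples of
members of `adaptedFamily n`. -/
def relationFamily (n : ℕ) : AdaptedIndex n → ↥(ksubsets n 3) → ℤ :=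
  Sum.elim (fun _ => 0) <| Sum.elim (fun e => (2 : ℤ) • triangleRow n 3 2 e) <|
    Sum.elim (fun j => (2 * ((n : ℤ) - 6)) • edgeRow n 3 2 j) <|
      Sum.elim (fun j => meetRow n 3 {2, (j : ℕ)})
        ![starRow n 3 2, (3 * ((n : ℤ) - 3)) • inclRow n 3 ∅]

/-- The coordinates of `relationFamily n` in the basis `adaptedFamily n`. -/
def adaptedMatrix (n : ℕ) : Matrix (AdaptedIndex n) (AdaptedIndex n) ℤ :=
  fromBlocks (diagonal fun _ => 0) 0 0 <| fromBlocks (diagonal fun _ => 2) 0 0 <|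
    fromBlocks (diagonal fun _ => 2 * ((n : ℤ) - 6)) 0 0 <| fromBlocks (diagonal fun _ => 1) 0 0
      !![(n : ℤ) - 6, 3; 0, 3 * ((n : ℤ) - 3)]

variable {n : ℕ}

theorem span_range_adaptedFamily (hn : 5 ≤ n) : span ℤ (Set.range (adaptedFamily n)) = ⊤ := by
  have hmem : ∀ i, adaptedFamily n i ∈ span ℤ (Set.range (adaptedFamily n)) :=
    fun i => subset_span ⟨i, rfl⟩
  have hsmall : ∀ S ⊆ Icc 1 n, #S ≤ 2 → inclRow n 3 S ∈ span ℤ (Set.range (adaptedFamily n)) :=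
    fun S hS hcard => inclRow_mem_of_card_le_two (f := {3, 4}) (by lia)
      (hmem (.inr (.inr (.inr (.inr 1))))) (hmem (.inr (.inr (.inr (.inr 0)))))
      (fun j hj => hmem (.inr (.inr (.inr (.inl ⟨j, hj⟩)))))
      (fun j hj => hmem (.inr (.inr (.inl ⟨j, hj⟩))))
      (fun e he hne => hmem (.inr (.inl ⟨e, mem_erase.2 ⟨hne, he⟩⟩))) hS hcard
  refine eq_top_iff.2 fun g _ => ?_
  rw [← sum_smul_inclRow g]
  exact sum_mem fun B _ => smul_mem _ _
    (inclRow_mem_of_mem_ksubsets_three hn hsmall (fun T hT => hmem (.inl ⟨T, hT⟩)) B.2)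

theorem card_adaptedIndex (hn : 5 ≤ n) :
    Fintype.card (AdaptedIndex n) = Fintype.card ↥(ksubsets n 3) := by
  have hcard : #(ksubsets n 3) = n.choose 3 := by
    rw [ksubsets_eq_powersetCard, card_powersetCard, Nat.card_Icc, Nat.add_sub_cancel]
  have h2 : 2 * n ≤ n.choose 2 := by
    have := Nat.choose_succ_right_eq n 1
    rw [Nat.choose_one_right] at this
    have : n * 4 ≤ n * (n - 1) := Nat.mul_le_mul_left n (by lia)
    lia
  have h3 : n.choose 2 ≤ n.choose 3 := by
    have := Nat.choose_succ_right_eq n 2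
    have : n.choose 2 * 3 ≤ n.choose 2 * (n - 2) := Nat.mul_le_mul_left _ (by lia)
    lia
  simp only [AdaptedIndex, Fintype.card_sum, Fintype.card_coe, Fintype.card_fin,
    card_freeTriples hn, card_freePairs hn, hcard, Nat.card_Icc]
  lia

theorem sum_adaptedMatrix_smul_adaptedFamily (hn : 2 ≤ n) (s : AdaptedIndex n) :
    ∑ i, adaptedMatrix n s i • adaptedFamily n i = relationFamily n s := by
  have hstar : starRow n 3 2 = ((n : ℤ) - 6) • inclRow n 3 {2} + (3 : ℤ) • inclRow n 3 ∅ := by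
    simpa using starRow_eq (k := 3) (show 2 ∈ Icc 1 n by grind)
  rcases s with T | e | j | j | i
  · simp [adaptedMatrix, relationFamily]
  · simp [adaptedMatrix, adaptedFamily, relationFamily, diagonal_apply]
  · simp [adaptedMatrix, adaptedFamily, relationFamily, diagonal_apply]
  · simp [adaptedMatrix, adaptedFamily, relationFamily, one_apply]
  · fin_cases i <;> simp [adaptedMatrix, adaptedFamily, relationFamily, hstar]

theorem interMat_mem_span_relationFamily (hn : 2 ≤ n) (e : ↥(ksubsets n 2)) :
    interMat n 2 3 1 e ∈ span ℤ (Set.range (relationFamily n)) := by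
  have hmem : ∀ s, relationFamily n s ∈ span ℤ (Set.range (relationFamily n)) :=
    fun s => subset_span ⟨s, rfl⟩
  refine meetRow_mem_of_mem_powersetCard_two (f := {3, 4}) hn
    (hmem (.inr (.inr (.inr (.inr 0))))) (hmem (.inr (.inr (.inr (.inr 1)))))
    (fun j hj => hmem (.inr (.inr (.inr (.inl ⟨j, hj⟩)))))
    (fun j hj => hmem (.inr (.inr (.inl ⟨j, hj⟩))))
    (fun e he hne => hmem (.inr (.inl ⟨e, mem_erase.2 ⟨hne, he⟩⟩)))
    e (ksubsets_eq_powersetCard n 2 ▸ e.2)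

theorem relationFamily_mem_span_interMat (hn : 2 ≤ n) (s : AdaptedIndex n) :
    relationFamily n s ∈ span ℤ (Set.range fun e => interMat n 2 3 1 e) := by
  have hmeet : ∀ e ∈ (Icc 1 n).powersetCard 2,
      meetRow n 3 e ∈ span ℤ (Set.range fun e => interMat n 2 3 1 e) :=
    fun e he => subset_span ⟨⟨e, ksubsets_eq_powersetCard n 2 ▸ he⟩, rfl⟩
  have hpair : ∀ i ∈ Icc 1 n, ∀ j ∈ Icc 1 n, i ≠ j →
      meetRow n 3 {i, j} ∈ span ℤ (Set.range fun e => interMat n 2 3 1 e) :=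
    fun i hi j hj hij => hmeet _ (mem_powersetCard.2 ⟨by grind, card_pair hij⟩)
  have hstar : ∀ i ∈ Icc 1 n, starRow n 3 i ∈ span ℤ (Set.range fun e => interMat n 2 3 1 e) :=
    fun i hi => sum_mem fun j hj =>
      hpair i hi j (mem_of_mem_erase hj) (ne_of_mem_erase hj).symm
  have h2 : 2 ∈ Icc 1 n := by grind
  have hsub : ∀ j ∈ Icc 3 n, j ∈ Icc 1 n ∧ 2 ≠ j := by grind
  rcases s with _ | e | j | j | i
  · exact zero_mem _
  · obtain ⟨he, hcard⟩ := mem_powersetCard.1 (mem_of_mem_erase e.2)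
    change (2 : ℤ) • triangleRow n 3 2 e ∈ _
    rw [two_smul_triangleRow hcard (by grind)]
    exact sub_mem
      (sum_mem fun i hi => hpair 2 h2 i (hsub i (he hi)).1 (hsub i (he hi)).2)
      (hmeet _ (mem_powersetCard.2 ⟨fun i hi => (hsub i (he hi)).1, hcard⟩))
  · obtain ⟨hj, hne⟩ := hsub j j.2
    change (2 * ((n : ℤ) - 2 * (3 : ℕ))) • edgeRow n 3 2 j ∈ _
    rw [smul_edgeRow h2 hj hne]
    exact sub_mem (sub_mem (hstar j hj) (hstar 2 h2)) (smul_mem _ _ (hpair 2 h2 j hj hne))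
  · exact hpair 2 h2 j (hsub j j.2).1 (hsub j j.2).2
  · fin_cases i
    · exact hstar 2 h2
    · change ((3 : ℕ) * ((n : ℤ) - (3 : ℕ))) • inclRow n 3 ∅ ∈ _
      rw [← sum_meetRow]
      exact sum_mem hmeet

theorem span_range_interMat (hn : 2 ≤ n) :
    span ℤ (Set.range fun e => interMat n 2 3 1 e) =
      span ℤ (Set.range fun s => ∑ i, adaptedMatrix n s i • adaptedFamily n i) := by
  simp only [sum_adaptedMatrix_smul_adaptedFamily hn]
  exact le_antisymm (span_le.2 (Set.range_subset_iff.2 (interMat_mem_span_relationFamily hn)))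
    (span_le.2 (Set.range_subset_iff.2 (relationFamily_mem_span_interMat hn)))

theorem nonempty_smithGroup_interMat_equiv (hn : 5 ≤ n) :
    Nonempty (SmithGroup (interMat n 2 3 1) ≃+ (Fin (n.choose 3 - n.choose 2) → ℤ) ×
      (Fin (n.choose 2 - 2 * n + 2) → ZMod 2) × (Fin (n - 2) → ZMod (2 * ((n : ℤ) - 6)).natAbs) ×
      SmithGroup !![(n : ℤ) - 6, 3; 0, 3 * ((n : ℤ) - 3)]) := by
  have hY : Fintype.card ↥(Icc 3 n) = n - 2 := by simp
  obtain ⟨e⟩ := nonempty_smithGroup_equiv_of_span_eq (adaptedFamily n)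
    (span_range_adaptedFamily hn) (card_adaptedIndex hn) (span_range_interMat (by lia))
  obtain ⟨eZero⟩ := nonempty_smithGroup_fromBlocks_diagonal_const_equiv 0
    ((Fintype.card_coe _).trans (card_freeTriples hn)) _
  obtain ⟨eTwo⟩ := nonempty_smithGroup_fromBlocks_diagonal_const_equiv 2
    ((Fintype.card_coe _).trans (card_freePairs hn)) _
  obtain ⟨eEdge⟩ := nonempty_smithGroup_fromBlocks_diagonal_const_equiv (2 * ((n : ℤ) - 6)) hY _
  obtain ⟨eOne⟩ := nonempty_smithGroup_fromBlocks_diagonal_const_equiv 1 hY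
    !![(n : ℤ) - 6, 3; 0, 3 * ((n : ℤ) - 3)]
  have : Unique (Fin (n - 2) → ZMod (1 : ℤ).natAbs) := inferInstanceAs (Unique (_ → ZMod 1))
  exact ⟨(e.trans eZero).trans <| (AddEquiv.refl _).prodCongr <| eTwo.trans <|
    (AddEquiv.refl _).prodCongr <| eEdge.trans <| (AddEquiv.refl _).prodCongr <|
    eOne.trans AddEquiv.uniqueProd⟩

end NormalForm

section Block

variable {A B C : Type*} [AddCommGroup A] [AddCommGroup B] [AddCommGroup C]

/-- Moves one summand `A` out of the power `Fin (k + 1) → A` and into the last factor. -/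
def powSuccProdAddEquiv (k : ℕ) :
    (Fin (k + 1) → A) × B × C ≃+ (Fin k → A) × B × A × C :=
  ((((Fin.consLinearEquiv ℤ fun _ => A).symm.toAddEquiv.trans AddEquiv.prodComm).prodCongr
    (AddEquiv.refl _)).trans (AddEquiv.prodProdProdComm _ _ _ _)).trans AddEquiv.prodAssoc

theorem nonempty_zmod_two_prod_smithGroup_block_equiv_of_dvd {n : ℤ} (h : 3 ∣ n) :
    Nonempty (ZMod 2 × SmithGroup !![n - 6, 3; 0, 3 * (n - 3)] ≃+
      ZMod ((n - 3) * (n - 6)).natAbs × ZMod 6) := by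
  obtain ⟨m, rfl⟩ := h
  obtain ⟨e⟩ := nonempty_smithGroup_triangular_equiv_of_dvd (m - 2) (3 * m - 3) 3
  have hdiag : 3 * (m - 2) = 3 * m - 6 := by ring
  rw [hdiag, mul_comm (3 * m - 6)] at e
  let sixEquiv : ZMod 6 ≃+ ZMod 2 × ZMod 3 :=
    (ZMod.chineseRemainder (show Nat.Coprime 2 3 by norm_num)).toAddEquiv
  exact ⟨(((AddEquiv.refl _).prodCongr e).trans AddEquiv.prodAssoc.symm).trans <|
    (sixEquiv.symm.prodCongr (AddEquiv.refl _)).trans AddEquiv.prodComm⟩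

theorem nonempty_zmod_two_prod_smithGroup_block_equiv_of_not_dvd {n : ℤ} (h : ¬ 3 ∣ n) :
    Nonempty (ZMod 2 × SmithGroup !![n - 6, 3; 0, 3 * (n - 3)] ≃+
      ZMod (3 * (n - 3) * (n - 6)).natAbs × ZMod 2) := by
  have hcoprime : IsCoprime (n - 6) 3 :=
    ((Int.prime_three.coprime_iff_not_dvd).2 (by lia)).symm
  obtain ⟨e⟩ := nonempty_smithGroup_triangular_equiv_of_isCoprime hcoprime (3 * (n - 3))
  rw [mul_comm (n - 6)] at e
  exact ⟨((AddEquiv.refl _).prodCongr e).trans AddEquiv.prodComm⟩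

end Block

/-- `S(A_{n,2,3,1}) ≅ ℤ^{C(n,3)−C(n,2)} ⊕ (ℤ/2ℤ)^{C(n,2)−2n+1} ⊕ (ℤ/2(n−6)ℤ)^{n−2} ⊕ T`,
with `T = ℤ/(n−3)(n−6)ℤ ⊕ ℤ/6ℤ` if `3 ∣ n` and `T = ℤ/3(n−3)(n−6)ℤ ⊕ ℤ/2ℤ` otherwise;
`ℤ/mℤ` means `ZMod |m|`, and `ℤ/0ℤ = ℤ`. -/
theorem statement18 (n : ℕ) (hn : 5 ≤ n) :
    (3 ∣ n → Nonempty (SmithGroup (interMat n 2 3 1) ≃+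
      ((Fin (n.choose 3 - n.choose 2) → ℤ) ×
        (Fin (n.choose 2 - 2 * n + 1) → ZMod 2) ×
        (Fin (n - 2) → ZMod (2 * ((n : ℤ) - 6)).natAbs) ×
        (ZMod (((n : ℤ) - 3) * ((n : ℤ) - 6)).natAbs × ZMod 6)))) ∧
    (¬ 3 ∣ n → Nonempty (SmithGroup (interMat n 2 3 1) ≃+
      ((Fin (n.choose 3 - n.choose 2) → ℤ) ×
        (Fin (n.choose 2 - 2 * n + 1) → ZMod 2) ×
        (Fin (n - 2) → ZMod (2 * ((n : ℤ) - 6)).natAbs) ×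
        (ZMod (3 * ((n : ℤ) - 3) * ((n : ℤ) - 6)).natAbs × ZMod 2)))) := by
  obtain ⟨e⟩ := nonempty_smithGroup_interMat_equiv hn
  let e' := e.trans ((AddEquiv.refl _).prodCongr (powSuccProdAddEquiv (n.choose 2 - 2 * n + 1)))
  refine ⟨fun h => ?_, fun h => ?_⟩
  · obtain ⟨eBlock⟩ :=
      nonempty_zmod_two_prod_smithGroup_block_equiv_of_dvd (Int.natCast_dvd_natCast.2 h)
    exact ⟨e'.trans <| (AddEquiv.refl _).prodCongr <| (AddEquiv.refl _).prodCongr <|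
      (AddEquiv.refl _).prodCongr eBlock⟩
  · obtain ⟨eBlock⟩ := nonempty_zmod_two_prod_smithGroup_block_equiv_of_not_dvd
      (mt Int.natCast_dvd_natCast.1 h)
    exact ⟨e'.trans <| (AddEquiv.refl _).prodCongr <| (AddEquiv.refl _).prodCongr <|
      (AddEquiv.refl _).prodCongr eBlock⟩
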